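/- arXiv:math/0703199 — 2 statements merged into one kernel-verified Lean document; each statement's English description precedes it below -/
import Mathlib

section
/- In a Coxeter system (W,S), if two reduced expressions represent the same element, then they are related by a finite sequence of braid moves (replacing an alternating subword sts... of length m(s,t) by tst... of length m(s,t)). (Tits' solution to the word problem, the form used for minimal galleries.) -/
/-- A single braid move on words in the generators: replace a consecutive alternating
subword `sts⋯` of length `m(s,t) < ∞` by `tst⋯` of the same length. -/
def BraidMoveRel {B : Type*} (M : CoxeterMatrix B) (ω ω' : List B) : Prop :=
  ∃ (l₁ l₂ : List B) (i j : B), M i j ≠ 0 ∧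
    ω = l₁ ++ CoxeterSystem.alternatingWord i j (M i j) ++ l₂ ∧
    ω' = l₁ ++ CoxeterSystem.alternatingWord j i (M j i) ++ l₂

namespace TitsBraid

open CoxeterSystem

variable {B W : Type*} [Group W] {M : CoxeterMatrix B}

/-! ### The geometric representation, and the order of `s i * s j` -/

/-- The Cartan-type coefficient attached to a pair of generators. -/
noncomputable def coef (M : CoxeterMatrix B) (i j : B) : ℝ :=
  if M i j = 0 then -2 else -2 * Real.cos (Real.pi / M i j)

/-- The coroot of `i`. -/
noncomputable def coroot (M : CoxeterMatrix B) (i : B) : Module.Dual ℝ (B →₀ ℝ) :=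
  Finsupp.linearCombination ℝ (coef M i)

theorem coroot_single (M : CoxeterMatrix B) (i j : B) :
    coroot M i (Finsupp.single j 1) = coef M i j := by
  simp [coroot]

theorem coef_self (M : CoxeterMatrix B) (i : B) : coef M i i = 2 := by
  simp [coef]

theorem coef_symm (M : CoxeterMatrix B) (i j : B) : coef M i j = coef M j i := by
  simp [coef, M.symmetric i j]

theorem coroot_self (M : CoxeterMatrix B) (i : B) :
    coroot M i (Finsupp.single i 1) = 2 := by
  rw [coroot_single, coef_self]

/-- The geometric reflection. -/
noncomputable def refl (M : CoxeterMatrix B) (i : B) : (B →₀ ℝ) ≃ₗ[ℝ] (B →₀ ℝ) :=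
  Module.reflection (coroot_self M i)

theorem t_eq (M : CoxeterMatrix B) (i j : B) (h : M i j ≠ 0) :
    2 * Real.cos (2 * Real.pi / M i j) = coef M i j * coef M j i - 2 := by
  rw [coef_symm M j i, coef, if_neg h, mul_div_assoc, Real.cos_two_mul]
  ring

theorem sin_theta_pos {m : ℕ} (h : 3 ≤ m) : 0 < Real.sin (2 * Real.pi / m) := by
  have h3 : (3 : ℝ) ≤ m := by exact_mod_cast h
  have := Real.pi_pos
  apply Real.sin_pos_of_pos_of_lt_pi
  · positivity
  · rw [div_lt_iff₀ (by positivity)]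
    nlinarith

theorem refl_liftable (M : CoxeterMatrix B) : M.IsLiftable (refl M) := by
  intro i j
  rcases Nat.lt_or_ge (M i j) 3 with hlt | hge
  · have : M i j = 0 ∨ M i j = 1 ∨ M i j = 2 := by omega
    rcases this with h | h | h
    · rw [h, pow_zero]
    · have : i = j := by
        by_contra hne
        exact M.off_diagonal i j hne h
      subst this
      rw [h, pow_one]
      ext1 z
      exact Module.involutive_reflection (coroot_self M i) z
    · rw [h]
      have hc : coef M i j = 0 := by simp [coef, h]
      have hc' : coef M j i = 0 := by rw [coef_symm, hc]
      apply LinearEquiv.ext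
      intro z
      simp only [pow_two, LinearEquiv.mul_apply, refl, Module.reflection_apply, map_sub, map_smul,
        coroot_single, hc, hc', coef_self, LinearEquiv.coe_one, id]
      module
  · have h0 : M i j ≠ 0 := by omega
    apply LinearEquiv.ext
    intro z
    have ht := t_eq M i j h0
    rw [← coroot_single, ← coroot_single] at ht
    rw [refl, refl, Module.reflection_mul_reflection_pow_apply (coroot_self M i) (coroot_self M j)
      (M i j) z _ ht]
    have hs := sin_theta_pos hge
    have hm : (M i j : ℝ) ≠ 0 := by exact_mod_cast h0
    set θ := 2 * Real.pi / M i j with hθ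
    have hmθ : (M i j : ℝ) * θ = 2 * Real.pi := by rw [hθ]; field_simp
    have key := fun n : ℤ => Polynomial.Chebyshev.S_two_mul_real_cos θ n
    set S := fun n : ℤ => (Polynomial.Chebyshev.S ℝ n).eval (2 * Real.cos θ) with hS
    change z + (S _ * (S _ + S _)) • _ + (S _ * (S _ + S _)) • _ = z
    change ∀ n, S n * Real.sin θ = _ at key
    obtain ⟨k, hk | hk⟩ := Nat.even_or_odd' (M i j)
    · have e1 : ((M i j : ℤ) - 2) / 2 = k - 1 := by omega
      have e2 : ((M i j : ℤ) - 1) / 2 = k - 1 := by omega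
      have hz : S (k - 1) = 0 := by
        have h1 := key (k - 1)
        have h2 : (((k : ℤ) - 1 : ℤ) + 1 : ℝ) * θ = Real.pi := by
          rw [hk] at hmθ; push_cast at hmθ ⊢; linarith
        rw [h2, Real.sin_pi] at h1
        exact (mul_eq_zero.mp h1).resolve_right hs.ne'
      rw [e1, e2, hz]
      simp
    · have e1 : ((M i j : ℤ) - 2) / 2 = k - 1 := by omega
      have e2 : ((M i j : ℤ) - 1) / 2 = k := by omega
      have e3 : ((M i j : ℤ) - 3) / 2 = k - 1 := by omega
      have e4 : ((M i j : ℤ)) / 2 = k := by omega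
      have hz : S k + S (k - 1) = 0 := by
        have h1 := key (k - 1)
        have h2 := key k
        have h3 : (((k : ℤ) : ℝ) + 1) * θ = 2 * Real.pi - (((k : ℤ) - 1 : ℤ) + 1 : ℝ) * θ := by
          rw [hk] at hmθ; push_cast at hmθ ⊢; linarith
        rw [h3, Real.sin_two_pi_sub] at h2
        have : (S k + S (k - 1)) * Real.sin θ = 0 := by rw [add_mul, h1, h2]; ring
        exact (mul_eq_zero.mp this).resolve_right hs.ne'
      rw [e1, e2, e3, e4, hz]
      simp

/-- The order of `s i * s j` is not smaller than `M i j`. -/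
theorem pow_ne_one (cs : CoxeterSystem M W) {i j : B} (hij : i ≠ j) {k : ℕ} (hk : 0 < k)
    (hkM : M i j = 0 ∨ k < M i j) : (cs.simple i * cs.simple j) ^ k ≠ 1 := by
  intro h
  have h1 := congrArg (cs.lift ⟨refl M, refl_liftable M⟩) h
  rw [map_pow, map_mul, cs.lift_apply_simple (refl_liftable M),
    cs.lift_apply_simple (refl_liftable M), map_one] at h1
  have h2 := congrArg (fun φ : (B →₀ ℝ) ≃ₗ[ℝ] (B →₀ ℝ) => φ (Finsupp.single i 1)) h1
  simp only [LinearEquiv.coe_one, id] at h2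
  rw [refl, refl, Module.reflection_mul_reflection_pow_apply_self] at h2
  rw [coroot_single, coroot_single] at h2
  have hi := DFunLike.congr_fun h2 i
  have hj := DFunLike.congr_fun h2 j
  simp [hij, hij.symm] at hi hj
  by_cases h0 : M i j = 0
  · have hc : coef M i j = -2 := by simp [coef, h0]
    have hc' : coef M j i = -2 := by rw [coef_symm, hc]
    rw [hc, hc'] at hj
    norm_num at hj
    omega
  · have hk2 : k < M i j := hkM.resolve_left h0
    rcases Nat.lt_or_ge (M i j) 3 with hlt | hge
    · have hM2 : M i j = 2 := by omega
      have hk1 : k = 1 := by omega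
      have hc : coef M i j = 0 := by simp [coef, hM2]
      rw [hc, hk1] at hi
      norm_num at hi
    · have hs := sin_theta_pos hge
      have hgx : coef M j i ≠ 0 := by
        rw [coef_symm, coef, if_neg h0]
        have h3 : (3 : ℝ) ≤ M i j := by exact_mod_cast hge
        have := Real.pi_pos
        have : 0 < Real.cos (Real.pi / M i j) := by
          apply Real.cos_pos_of_mem_Ioo
          constructor
          · have : 0 < Real.pi / M i j := by positivity
            linarith
          · rw [div_lt_iff₀ (by positivity)]
            nlinarith
        linarith
      rw [← t_eq M i j h0] at hi hj
      have hj' := hj.resolve_right hgx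
      rw [hj', add_zero] at hi
      have k1 := Polynomial.Chebyshev.S_two_mul_real_cos (2 * Real.pi / M i j) k
      have k2 := Polynomial.Chebyshev.S_two_mul_real_cos (2 * Real.pi / M i j) (k - 1)
      rw [hi] at k1
      rw [hj'] at k2
      push_cast at k1 k2
      rw [sub_add_cancel, zero_mul] at k2
      rw [add_mul, Real.sin_add, ← k2, one_mul, zero_mul, zero_add, one_mul] at k1
      have hcos : Real.cos (k * (2 * Real.pi / M i j)) = 1 :=
        mul_right_cancel₀ hs.ne' (by rw [one_mul]; exact k1.symm)
      have hpi := Real.pi_pos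
      have hkr : (0 : ℝ) < k := by exact_mod_cast hk
      have hmr : (k : ℝ) < M i j := by exact_mod_cast hk2
      have hpos : 0 < k * (2 * Real.pi / M i j) := by
        have : (0 : ℝ) < M i j := by linarith
        positivity
      have hlt : k * (2 * Real.pi / M i j) < 2 * Real.pi := by
        rw [← mul_div_assoc, div_lt_iff₀ (by linarith)]
        nlinarith
      rw [Real.cos_eq_one_iff_of_lt_of_lt (by linarith) hlt] at hcos
      linarith

/-! ### Inversion sequences and the exchange property -/

theorem ris_append (cs : CoxeterSystem M W) (u v : List B) :
    cs.rightInvSeq (u ++ v) =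
      (cs.rightInvSeq u).map (fun t => (cs.wordProd v)⁻¹ * t * cs.wordProd v) ++
        cs.rightInvSeq v := by
  induction u with
  | nil => simp
  | cons i u ih => simp [rightInvSeq, ih, wordProd_append, mul_assoc]

theorem ris_alternatingWord (cs : CoxeterSystem M W) (i j : B) (n : ℕ) :
    cs.rightInvSeq (alternatingWord i j n) =
      (List.range n).reverse.map
        (fun p => (cs.simple j * cs.simple i) ^ p * cs.simple j) := by
  induction n generalizing i j with
  | zero => simp [alternatingWord]
  | succ n ih =>
    rw [alternatingWord_succ, List.concat_eq_append, ris_append, ih j i, List.range_succ_eq_map]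
    simp only [List.reverse_cons, List.map_append, List.map_map, ← List.map_reverse]
    congr 1
    · apply List.map_congr_left
      intro p _
      have : ∀ p : ℕ, cs.simple j * (cs.simple i * cs.simple j) ^ p
          = (cs.simple j * cs.simple i) ^ p * cs.simple j := by
        intro p
        induction p with
        | zero => simp
        | succ p ihp => rw [pow_succ, ← mul_assoc, ihp, pow_succ]; simp only [mul_assoc]
      simp only [Function.comp, wordProd_singleton, inv_simple]
      rw [← mul_assoc, this, Nat.succ_eq_add_one, pow_succ]
      simp only [mul_assoc]
    · simp

open Classical in
/-- The elementary permutation of `W × ZMod 2` attached to a generator. -/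
noncomputable def act (cs : CoxeterSystem M W) (i : B) : Function.End (W × ZMod 2) :=
  fun p => (cs.simple i * p.1 * cs.simple i, p.2 + if p.1 = cs.simple i then 1 else 0)

open Classical in
theorem act_word (cs : CoxeterSystem M W) (ω : List B) (p : W × ZMod 2) :
    ((ω.map (act cs)).prod : Function.End (W × ZMod 2)) p =
      (cs.wordProd ω * p.1 * (cs.wordProd ω)⁻¹,
        p.2 + ((cs.rightInvSeq ω).count p.1 : ZMod 2)) := by
  induction ω with
  | nil =>
    change p = _
    simp
  | cons i ω ih =>
    rw [List.map_cons, List.prod_cons]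
    change act cs i ((ω.map (act cs)).prod p) = _
    rw [ih]
    simp only [act, rightInvSeq, wordProd_cons, List.count_cons, beq_iff_eq]
    have : (cs.wordProd ω * p.1 * (cs.wordProd ω)⁻¹ = cs.simple i) ↔
        ((cs.wordProd ω)⁻¹ * cs.simple i * cs.wordProd ω = p.1) := by
      constructor
      · intro h; rw [← h]; group
      · intro h; rw [← h]; group
    ext
    · simp [mul_assoc]
    · simp [this, add_assoc]

theorem prod_alt {G : Type*} [Monoid G] (f : B → G) (i j : B) (n : ℕ) :
    ((alternatingWord i j (2 * n)).map f).prod = (f i * f j) ^ n := by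
  induction n with
  | zero => simp [alternatingWord]
  | succ n ih =>
    rw [show 2 * (n + 1) = 2 * n + 1 + 1 by ring, alternatingWord_succ, alternatingWord_succ]
    simp [ih, pow_succ]

theorem act_liftable (cs : CoxeterSystem M W) : M.IsLiftable (act cs) := by
  classical
  intro i j
  rw [← prod_alt]
  funext p
  rw [act_word]
  have h1 : cs.wordProd (alternatingWord i j (2 * M i j)) = 1 := by
    rw [wordProd, prod_alt, cs.simple_mul_simple_pow]
  have h2 : (((cs.rightInvSeq (alternatingWord i j (2 * M i j))).count p.1 : ℕ) : ZMod 2) = 0 := by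
    rw [ris_alternatingWord, two_mul, List.range_add, List.reverse_append, List.map_append,
      List.count_append, ← List.map_reverse, List.map_map]
    have : ((fun p => (cs.simple j * cs.simple i) ^ p * cs.simple j) ∘ fun x => M i j + x) =
        (fun p => (cs.simple j * cs.simple i) ^ p * cs.simple j) := by
      funext x
      simp [pow_add]
    rw [this, ← two_mul]
    push_cast
    rw [show (2 : ZMod 2) = 0 from rfl, zero_mul]
  rw [h1, h2]
  change _ = p
  simp

theorem count_eq (cs : CoxeterSystem M W) [DecidableEq W] {ω ω' : List B}
    (h : cs.wordProd ω = cs.wordProd ω') (t : W) :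
    ((cs.rightInvSeq ω).count t : ZMod 2) = ((cs.rightInvSeq ω').count t : ZMod 2) := by
  have key : ∀ ω : List B, cs.lift ⟨act cs, act_liftable cs⟩ (cs.wordProd ω) =
      (ω.map (act cs)).prod := by
    intro ω
    induction ω with
    | nil => simp
    | cons i ω ih =>
      rw [wordProd_cons, map_mul, cs.lift_apply_simple (act_liftable cs), ih]
      simp
  have h1 : (ω.map (act cs)).prod = (ω'.map (act cs)).prod := by rw [← key, ← key, h]
  have h2 := congrArg Prod.snd (congrFun h1 (t, (0 : ZMod 2)))
  rw [act_word, act_word] at h2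
  simp only [zero_add] at h2
  convert h2

/-- The strong exchange property, for simple right descents. -/
theorem exchange (cs : CoxeterSystem M W) (ω : List B) (i : B)
    (h : cs.IsRightDescent (cs.wordProd ω) i) : cs.simple i ∈ cs.rightInvSeq ω := by
  classical
  obtain ⟨u, hu, hu'⟩ := cs.exists_isReduced (cs.wordProd ω * cs.simple i)
  have hprod : cs.wordProd ω = cs.wordProd (u ++ [i]) := by
    rw [wordProd_append, ← hu']; simp
  have hred : cs.IsReduced (u ++ [i]) := by
    rw [isRightDescent_iff] at h
    rw [CoxeterSystem.IsReduced, ← hprod, ← h, hu', hu.eq]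
    simp
  have hmem : cs.simple i ∈ cs.rightInvSeq (u ++ [i]) := by
    rw [ris_append]; simp
  have h1 := count_eq cs hprod (cs.simple i)
  rw [List.count_eq_one_of_mem (hred.nodup_rightInvSeq) hmem] at h1
  by_contra hn
  rw [List.count_eq_zero_of_not_mem hn] at h1
  simp at h1

/-! ### Dihedral suffixes -/

theorem exists_suffix (cs : CoxeterSystem M W) (w : W) (k : ℕ) :
    ∀ {i j : B}, i ≠ j → cs.IsRightDescent w i → cs.IsRightDescent w j →
      (M i j = 0 ∨ k ≤ M i j) →
    ∃ (a b : B) (u : List B), ((a = i ∧ b = j) ∨ (a = j ∧ b = i)) ∧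
      cs.IsReduced (u ++ alternatingWord a b k) ∧
      cs.wordProd (u ++ alternatingWord a b k) = w := by
  induction k with
  | zero =>
    intro i j _ _ _ _
    obtain ⟨u, hu, hw⟩ := cs.exists_isReduced w
    exact ⟨i, j, u, Or.inl ⟨rfl, rfl⟩, by simpa [alternatingWord] using hu,
      by simpa [alternatingWord] using hw.symm⟩
  | succ k ih =>
    intro i j hij hi hj hM
    obtain ⟨a, b, u, hab, hred, hw⟩ := ih hij hi hj (hM.imp_right (by omega))
    obtain ⟨hne, ha, hM'⟩ : a ≠ b ∧ cs.IsRightDescent w a ∧ (M b a = 0 ∨ k + 1 ≤ M b a) := by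
      rcases hab with ⟨rfl, rfl⟩ | ⟨rfl, rfl⟩
      · exact ⟨hij, hi, by rwa [M.symmetric]⟩
      · exact ⟨hij.symm, hj, hM⟩
    refine ⟨b, a, ?_⟩
    have hex := exchange cs (u ++ alternatingWord a b k) a (by rwa [hw])
    rw [ris_append, List.mem_append] at hex
    rcases hex with hex | hex
    · obtain ⟨t, ht, hta⟩ := List.mem_map.mp hex
      obtain ⟨n, hn, rfl⟩ := List.mem_iff_getElem.mp ht
      have hn' : n < u.length := by simpa using hn
      have he := cs.wordProd_mul_getD_rightInvSeq u n
      rw [List.getD_eq_getElem _ 1 hn] at he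
      have hprod : cs.wordProd (u.eraseIdx n ++ alternatingWord b a (k + 1)) = w := by
        rw [alternatingWord_succ, List.concat_eq_append, wordProd_append, wordProd_append, ← he,
          wordProd_singleton]
        rw [← hw, wordProd_append]
        rw [← hta]
        rw [← mul_right_inj (cs.wordProd u)⁻¹]
        have hr := (cs.isReflection_of_mem_rightInvSeq u ht).mul_self
        simp only [mul_assoc, mul_inv_cancel_left, inv_mul_cancel_left]
        rw [← mul_assoc _ _ (cs.wordProd (alternatingWord a b k)), hr, one_mul]
      refine ⟨u.eraseIdx n, by tauto, ?_, hprod⟩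
      have hl := hred.eq
      rw [CoxeterSystem.IsReduced, hprod, ← hw, hl]
      have := List.length_eraseIdx_add_one hn'
      simp only [List.length_append, length_alternatingWord]
      omega
    · exfalso
      rw [ris_alternatingWord] at hex
      obtain ⟨p, hp, hpa⟩ := List.mem_map.mp hex
      have hp' : p < k := by simpa using hp
      refine pow_ne_one cs hne.symm (Nat.succ_pos p) (hM'.imp_right (by omega)) ?_
      rw [Nat.succ_eq_add_one, pow_succ, ← mul_assoc, hpa, cs.simple_mul_simple_self]

/-! ### Braid equivalence -/

theorem braid_append_right {ω ω' : List B} (v : List B)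
    (h : Relation.ReflTransGen (BraidMoveRel M) ω ω') :
    Relation.ReflTransGen (BraidMoveRel M) (ω ++ v) (ω' ++ v) := by
  refine Relation.ReflTransGen.lift (fun l => l ++ v) ?_ _ _ h
  rintro _ _ ⟨l₁, l₂, i, j, hm, rfl, rfl⟩
  exact ⟨l₁, l₂ ++ v, i, j, hm, by simp, by simp⟩

theorem main_aux (cs : CoxeterSystem M W) (n : ℕ) : ∀ (ω ω' : List B), ω.length = n →
    cs.IsReduced ω → cs.IsReduced ω' → cs.wordProd ω = cs.wordProd ω' →
    Relation.ReflTransGen (BraidMoveRel M) ω ω' := by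
  induction n with
  | zero =>
    intro ω ω' hl h h' hw
    have hl' : ω'.length = 0 := by rw [← h'.eq, ← hw, h.eq, hl]
    rw [List.length_eq_zero_iff] at hl hl'
    rw [hl, hl']
  | succ n ih =>
    -- words ending in the same letter
    have same : ∀ (u u' : List B) (i : B), (u ++ [i]).length = n + 1 →
        cs.IsReduced (u ++ [i]) → cs.IsReduced (u' ++ [i]) →
        cs.wordProd (u ++ [i]) = cs.wordProd (u' ++ [i]) →
        Relation.ReflTransGen (BraidMoveRel M) (u ++ [i]) (u' ++ [i]) := by
      intro u u' i hl h h' hw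
      apply braid_append_right
      refine ih u u' (by simpa using hl) ?_ ?_ ?_
      · simpa using h.take u.length
      · simpa using h'.take u'.length
      · simpa [wordProd_append] using hw
    intro ω ω' hl h h' hw
    have hl' : ω'.length = n + 1 := by rw [← h'.eq, ← hw, h.eq, hl]
    obtain ⟨u, i, rfl⟩ : ∃ u i, ω = u ++ [i] := by
      rcases List.eq_nil_or_concat ω with rfl | ⟨u, i, hu⟩
      · simp at hl
      · exact ⟨u, i, by simpa using hu⟩
    obtain ⟨v, j, rfl⟩ : ∃ u i, ω' = u ++ [i] := by
      rcases List.eq_nil_or_concat ω' with rfl | ⟨u, i, hu⟩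
      · simp at hl'
      · exact ⟨u, i, by simpa using hu⟩
    by_cases hij : i = j
    · subst hij
      exact same u v i hl h h' hw
    · have desc : ∀ (u : List B) (i : B), cs.IsReduced (u ++ [i]) →
          cs.IsRightDescent (cs.wordProd (u ++ [i])) i := by
        intro u i h
        rw [IsRightDescent, h.eq, wordProd_append, wordProd_singleton,
          cs.simple_mul_simple_cancel_right]
        have := cs.length_wordProd_le u
        simp
        omega
      have hi := desc u i h
      have hj := desc v j h'
      rw [← hw] at hj
      have hM0 : M i j ≠ 0 := by
        intro h0
        obtain ⟨a, b, x, _, hr, hx⟩ := exists_suffix cs _ (n + 2) hij hi hj (Or.inl h0)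
        have h1 := hr.eq
        rw [hx, h.eq, hl] at h1
        simp at h1
        omega
      obtain ⟨a, b, x, hab, hr, hx⟩ := exists_suffix cs _ (M i j) hij hi hj (Or.inr le_rfl)
      have hMab : M a b = M i j := by
        rcases hab with ⟨rfl, rfl⟩ | ⟨rfl, rfl⟩
        · rfl
        · exact M.symmetric _ _
      rw [← hMab] at hr hx
      have hx2 : cs.wordProd (x ++ alternatingWord b a (M b a)) = cs.wordProd (u ++ [i]) := by
        rw [← hx, wordProd_append, wordProd_append]
        congr 1
        exact cs.wordProd_braidWord_eq b a
      have hr2 : cs.IsReduced (x ++ alternatingWord b a (M b a)) := by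
        rw [CoxeterSystem.IsReduced, hx2, ← hx, hr.eq]
        simp [M.symmetric a b]
      -- the two suffix forms, by last letter
      have fin : ∀ c d : B, M c d ≠ 0 → 
          cs.IsReduced (x ++ alternatingWord c d (M c d)) →
          cs.wordProd (x ++ alternatingWord c d (M c d)) = cs.wordProd (u ++ [i]) →
          cs.IsReduced (x ++ alternatingWord d c (M d c)) →
          cs.wordProd (x ++ alternatingWord d c (M d c)) = cs.wordProd (u ++ [i]) →
          d = i → c = j →
          Relation.ReflTransGen (BraidMoveRel M) (u ++ [i]) (v ++ [j]) := by
        intro c d hcd r1 w1 r2 w2 hd hc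
        subst hd hc
        have mv : BraidMoveRel M (x ++ alternatingWord c d (M c d))
            (x ++ alternatingWord d c (M d c)) :=
          ⟨x, [], c, d, hcd, by simp, by simp⟩
        have hdc : M d c ≠ 0 := by rwa [M.symmetric]
        have shape : ∀ (c d : B), M c d ≠ 0 → ∃ y, x ++ alternatingWord c d (M c d) = y ++ [d] := by
          intro c d h0
          obtain ⟨m, hm⟩ := Nat.exists_eq_succ_of_ne_zero h0
          rw [hm, Nat.succ_eq_add_one, alternatingWord_succ]
          exact ⟨x ++ alternatingWord d c m, by simp⟩
        obtain ⟨y, hy⟩ := shape c d hcd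
        obtain ⟨z, hz⟩ := shape d c hdc
        rw [hy] at mv r1 w1
        rw [hz] at mv r2 w2
        refine (same u y d hl h r1 w1.symm).trans ((Relation.ReflTransGen.single mv).trans ?_)
        refine same z v c ?_ r2 h' (w2.trans hw)
        rw [← r2.eq, w2, h.eq, hl]
      have hab0 : M a b ≠ 0 := by rwa [hMab]
      rcases hab with ⟨ha, hb⟩ | ⟨ha, hb⟩
      · exact fin b a (by rwa [M.symmetric]) hr2 hx2 hr hx ha hb
      · exact fin a b hab0 hr hx hr2 hx2 hb ha

end TitsBraid

/-- Tits' solution to the word problem: any two reduced expressions of the same element of a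
Coxeter group are related by a finite sequence of braid moves. -/
theorem reduced_words_related_by_braid_moves {B W : Type*} [Group W] {M : CoxeterMatrix B}
    (cs : CoxeterSystem M W) (ω ω' : List B)
    (hω : cs.IsReduced ω) (hω' : cs.IsReduced ω')
    (h : cs.wordProd ω = cs.wordProd ω') :
    Relation.ReflTransGen (BraidMoveRel M) ω ω' := by
  exact TitsBraid.main_aux cs ω.length ω ω' rfl hω hω' h
end

section
/- The asymptotic dimension of any building C of type (W,S) (with the gallery metric) equals the asymptotic dimension of W with the word metric. -/
/-- `AsdimLE ρ n`: the space `X` with distance function `ρ` has asymptotic dimension at most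
`n`: for every `d > 0` there are `n + 1` families of subsets whose union is a uniformly
bounded cover, and within each family distinct sets are `d`-disjoint. -/
def AsdimLE {X : Type*} (ρ : X → X → ℝ) (n : ℕ) : Prop :=
  ∀ d : ℝ, 0 < d → ∃ 𝒰 : Fin (n + 1) → Set (Set X),
    (∃ R : ℝ, ∀ i, ∀ U ∈ 𝒰 i, ∀ x ∈ U, ∀ y ∈ U, ρ x y ≤ R) ∧
    (∀ x : X, ∃ i, ∃ U ∈ 𝒰 i, x ∈ U) ∧
    (∀ i, ∀ U ∈ 𝒰 i, ∀ V ∈ 𝒰 i, U ≠ V → ∀ x ∈ U, ∀ y ∈ V, d ≤ ρ x y)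

/-- The asymptotic dimension of the space `X` with distance function `ρ`,
as an extended natural number (`⊤` if no finite `n` works). -/
noncomputable def asdim {X : Type*} (ρ : X → X → ℝ) : ℕ∞ :=
  sInf {m : ℕ∞ | ∃ n : ℕ, m = (n : ℕ∞) ∧ AsdimLE ρ n}

/-- A building of type `(W, S)` (Abramenko–Brown `W`-metric definition): a set of chambers
`C` with a `W`-valued distance `δC` satisfying the standard building axioms (WD1)–(WD3). -/
structure IsBuilding {B W C : Type*} [Group W] {M : CoxeterMatrix B}
    (cs : CoxeterSystem M W) (δC : C → C → W) : Prop where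
  eq_one_iff : ∀ c d : C, δC c d = 1 ↔ c = d
  wd2 : ∀ (c d d' : C) (i : B), δC d d' = cs.simple i →
    δC c d' = δC c d * cs.simple i ∨ δC c d' = δC c d
  wd2' : ∀ (c d d' : C) (i : B), δC d d' = cs.simple i →
    cs.length (δC c d * cs.simple i) = cs.length (δC c d) + 1 →
    δC c d' = δC c d * cs.simple i
  wd3 : ∀ (c d : C) (i : B), ∃ d' : C, δC d d' = cs.simple i ∧
    δC c d' = δC c d * cs.simple i

/-- A gallery in the building: a sequence of consecutively adjacent chambers. -/
def IsGallery {B W C : Type*} [Group W] {M : CoxeterMatrix B}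
    (cs : CoxeterSystem M W) (δC : C → C → W) (l : List C) : Prop :=
  l.Chain' (fun c d => ∃ i : B, δC c d = cs.simple i)

/-- A minimal gallery from `x` to `y`: a gallery starting at `x`, ending at `y`,
whose length (number of steps) equals `ℓ(δC x y)`. -/
def IsMinGallery {B W C : Type*} [Group W] {M : CoxeterMatrix B}
    (cs : CoxeterSystem M W) (δC : C → C → W) (x y : C) (l : List C) : Prop :=
  IsGallery cs δC l ∧ l.head? = some x ∧ l.getLast? = some y ∧
    l.length = cs.length (δC x y) + 1

/-- A gallery in the Coxeter complex `W`: consecutive elements differ by a simple reflection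
on the right. -/
def IsWGallery {B W : Type*} [Group W] {M : CoxeterMatrix B}
    (cs : CoxeterSystem M W) (l : List W) : Prop :=
  l.Chain' (fun u v => ∃ i : B, v = u * cs.simple i)

/-- A minimal gallery from `u` to `w` in the Coxeter complex `W`. -/
def IsMinWGallery {B W : Type*} [Group W] {M : CoxeterMatrix B}
    (cs : CoxeterSystem M W) (u w : W) (l : List W) : Prop :=
  IsWGallery cs l ∧ l.head? = some u ∧ l.getLast? = some w ∧
    l.length = cs.length (u⁻¹ * w) + 1

namespace DS

open CoxeterSystem

section Cox

variable {B W : Type*} [Group W] {M : CoxeterMatrix B} (cs : CoxeterSystem M W)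

open Classical in
/-- The action of a generator on `W × ZMod 2`. -/
noncomputable def gen (i : B) : Function.End (W × ZMod 2) :=
  fun p => (cs.simple i * p.1 * cs.simple i, p.2 + if p.1 = cs.simple i then 1 else 0)

open Classical in
lemma gen_pow (i j : B) (k : ℕ) (t : W) (e : ZMod 2) :
    ((gen cs i * gen cs j) ^ k) (t, e) =
      ((cs.simple i * cs.simple j) ^ k * t * (cs.simple j * cs.simple i) ^ k,
        e + ∑ n ∈ Finset.range (2 * k),
          if t = (cs.simple j * cs.simple i) ^ n * cs.simple j then 1 else 0) := by
  induction k with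
  | zero => simp; rfl
  | succ k ih =>
    rw [pow_succ']
    change (gen cs i * gen cs j) (((gen cs i * gen cs j) ^ k) (t, e)) = _
    rw [ih]
    change gen cs i (gen cs j _) = _
    have hinv : ((cs.simple j * cs.simple i) ^ k)⁻¹ = (cs.simple i * cs.simple j) ^ k := by
      rw [← inv_pow]; simp
    have hinv' : ((cs.simple i * cs.simple j) ^ k)⁻¹ = (cs.simple j * cs.simple i) ^ k := by
      rw [← inv_pow]; simp
    have hs : ∀ n : ℕ, cs.simple j * (cs.simple i * cs.simple j) ^ n
        = (cs.simple j * cs.simple i) ^ n * cs.simple j := by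
      intro n
      induction n with
      | zero => simp
      | succ n ihn =>
        rw [pow_succ, ← mul_assoc, ihn, pow_succ]; simp [mul_assoc]
    have h1 : ((cs.simple i * cs.simple j) ^ k * t * (cs.simple j * cs.simple i) ^ k
        = cs.simple j) ↔ t = (cs.simple j * cs.simple i) ^ (2 * k) * cs.simple j := by
      rw [two_mul, pow_add, mul_assoc _ _ (cs.simple j), ← hs k, ← hinv]
      constructor
      · intro h
        generalize (cs.simple j * cs.simple i) ^ k = a at h ⊢
        rw [← h]; group
      · intro h; rw [h]; group
    have h2 : (cs.simple j * ((cs.simple i * cs.simple j) ^ k * t *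
        (cs.simple j * cs.simple i) ^ k) * cs.simple j
        = cs.simple i) ↔ t = (cs.simple j * cs.simple i) ^ (2 * k + 1) * cs.simple j := by
      have : (cs.simple j * cs.simple i) ^ (2 * k + 1) * cs.simple j =
          (cs.simple j * cs.simple i) ^ k * (cs.simple j * cs.simple i * cs.simple j) *
            (cs.simple i * cs.simple j) ^ k := by
        rw [mul_assoc ((cs.simple j * cs.simple i) ^ k), mul_assoc (cs.simple j * cs.simple i), hs,
          ← mul_assoc, ← mul_assoc, mul_assoc ((cs.simple j * cs.simple i) ^ k), ← pow_succ',
          ← pow_add]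
        congr 2; omega
      rw [this, ← hinv]
      constructor
      · intro h
        generalize (cs.simple j * cs.simple i) ^ k = a at h ⊢
        rw [← h]; simp [mul_assoc]
      · intro h
        rw [h]; simp [mul_assoc]
    have e1 : 2 * (k + 1) = 2 * k + 1 + 1 := by ring
    rw [e1, Finset.sum_range_succ, Finset.sum_range_succ]
    simp only [gen, h1, h2]
    ext
    · rw [pow_succ' (cs.simple i * cs.simple j), pow_succ (cs.simple j * cs.simple i) k]
      simp only [mul_assoc]
    · simp only [add_assoc]

lemma gen_liftable : M.IsLiftable (gen cs) := by
  classical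
  intro i j
  funext ⟨t, e⟩
  rw [gen_pow]
  have h1 : (cs.simple i * cs.simple j) ^ M i j = 1 := cs.simple_mul_simple_pow i j
  have h2 : (cs.simple j * cs.simple i) ^ M i j = 1 := cs.simple_mul_simple_pow' i j
  rw [h1, h2, two_mul, Finset.sum_range_add]
  simp only [pow_add, h2, one_mul, mul_one]
  rw [CharTwo.add_self_eq_zero, add_zero]
  rfl

noncomputable def act : W →* Function.End (W × ZMod 2) := cs.lift ⟨gen cs, gen_liftable cs⟩

lemma act_simple (i : B) : act cs (cs.simple i) = gen cs i := cs.lift_apply_simple _ i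

/-- inversion cocycle -/
noncomputable def nn (w t : W) : ZMod 2 := (act cs w (t, 0)).2

lemma act_apply (w t : W) (e : ZMod 2) : act cs w (t, e) = (w * t * w⁻¹, e + nn cs w t) := by
  have key : ∀ w : W, ∀ t : W, ∃ n : ZMod 2, ∀ e, act cs w (t, e) = (w * t * w⁻¹, e + n) := by
    intro w
    induction w using cs.simple_induction_left with
    | one => intro t; refine ⟨0, fun e => ?_⟩; simp; rfl
    | mul_simple_left w i ih =>
      intro t
      obtain ⟨n, hn⟩ := ih t
      refine ⟨n + (gen cs i (w * t * w⁻¹, 0)).2, fun e => ?_⟩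
      rw [map_mul]
      change act cs (cs.simple i) (act cs w (t, e)) = _
      rw [hn, act_simple]
      simp [gen, mul_assoc, add_assoc]
  obtain ⟨n, hn⟩ := key w t
  rw [nn, hn, hn]; simp

lemma nn_mul (x y t : W) : nn cs (x * y) t = nn cs y t + nn cs x (y * t * y⁻¹) := by
  rw [nn, map_mul]
  change (act cs x (act cs y (t, 0))).2 = _
  rw [act_apply, act_apply]; simp

lemma nn_one (t : W) : nn cs 1 t = 0 := by
  rw [nn, map_one]; rfl

lemma nn_simple_self (i : B) : nn cs (cs.simple i) (cs.simple i) = 1 := by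
  rw [nn, act_simple]; simp [gen]

lemma nn_simple_ne (i : B) (t : W) (h : t ≠ cs.simple i) : nn cs (cs.simple i) t = 0 := by
  rw [nn, act_simple]; simp [gen, h]

lemma nn_inv (u t : W) : nn cs u⁻¹ t = nn cs u (u⁻¹ * t * u) := by
  have h := nn_mul cs u u⁻¹ t
  rw [mul_inv_cancel, nn_one, inv_inv] at h
  exact CharTwo.add_eq_zero.1 h.symm

lemma nn_self {t : W} (ht : cs.IsReflection t) : nn cs t t = 1 := by
  obtain ⟨u, i, rfl⟩ := ht
  rw [nn_mul, nn_mul, nn_inv]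
  have e1 : u⁻¹ * (u * cs.simple i * u⁻¹) * u = cs.simple i := by group
  have e2 : u⁻¹ * (u * cs.simple i * u⁻¹) * u⁻¹⁻¹ = cs.simple i := by group
  rw [e1, e2]
  simp only [nn_simple_self, inv_simple, simple_mul_simple_self, one_mul]
  have := CharTwo.add_self_eq_zero (nn cs u (cs.simple i))
  linear_combination this

lemma mem_ris_of_nn (ω : List B) (t : W) (h : nn cs (cs.wordProd ω) t ≠ 0) :
    t ∈ cs.rightInvSeq ω := by
  induction ω with
  | nil => simp [nn_one] at h
  | cons i ω ih =>
    rw [wordProd_cons, nn_mul] at h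
    rw [rightInvSeq, List.mem_cons]
    by_cases h1 : nn cs (cs.wordProd ω) t = 0
    · left
      rw [h1, zero_add] at h
      by_contra hne
      apply h
      apply nn_simple_ne
      intro h2
      apply hne
      rw [← h2]; group
    · exact Or.inr (ih h1)

lemma zmod2 (a : ZMod 2) : a = 0 ∨ a = 1 := by
  revert a; decide

lemma lt_of_nn {w t : W} (h : nn cs w t = 1) : cs.length (w * t) < cs.length w := by
  obtain ⟨ω, hω, rfl⟩ := cs.exists_isReduced w
  exact (cs.isRightInversion_of_mem_rightInvSeq hω
    (mem_ris_of_nn cs ω t (by rw [h]; decide))).2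

lemma nn_iff {w t : W} (ht : cs.IsReflection t) :
    cs.length (w * t) < cs.length w ↔ nn cs w t = 1 := by
  refine ⟨fun h => ?_, lt_of_nn cs⟩
  rcases zmod2 (nn cs w t) with h0 | h1
  · exfalso
    have : nn cs (w * t) t = 1 := by
      rw [nn_mul, nn_self cs ht]
      have : t * t * t⁻¹ = t := by group
      rw [this, h0, add_zero]
    have := lt_of_nn cs this
    rw [mul_assoc, ht.mul_self, mul_one] at this
    omega
  · exact h1

lemma nn_iff_left (w : W) (i : B) :
    cs.length (cs.simple i * w) < cs.length w ↔ nn cs w (w⁻¹ * cs.simple i * w) = 1 := by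
  have ht : cs.IsReflection (w⁻¹ * cs.simple i * w) := ⟨w⁻¹, i, by simp⟩
  rw [← nn_iff cs ht]
  simp [← mul_assoc]

/-- The wall crossed when passing from `w` to `s w` does not cut the `N`-ball. -/
def StepOK (N : ℕ) (w : W) (i : B) : Prop :=
  ∀ v, cs.length v ≤ N →
    (cs.length (cs.simple i * (w * v)) < cs.length (w * v) ↔
      cs.length (cs.simple i * w) < cs.length w)

def Step (N : ℕ) (w w' : W) : Prop := ∃ i, StepOK cs N w i ∧ w' = cs.simple i * w

def HH (N : ℕ) : Set W := {t | ∃ v, cs.length v ≤ N ∧ nn cs v t = 1}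

lemma ball_finite [Finite B] (N : ℕ) : {v : W | cs.length v ≤ N}.Finite := by
  have : {v : W | cs.length v ≤ N} ⊆ cs.wordProd '' {l : List B | l.length ≤ N} := by
    intro v hv
    obtain ⟨ω, hω, rfl⟩ := cs.exists_isReduced v
    refine ⟨ω, ?_, rfl⟩
    rw [Set.mem_ofPred_eq, hω.eq] at hv
    exact hv
  exact ((List.finite_length_le B N).image _).subset this

lemma HH_finite [Finite B] (N : ℕ) : (HH cs N).Finite := by
  have : HH cs N ⊆ Set.image2 (fun a b => a⁻¹ * b) {v : W | cs.length v ≤ N}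
      {v : W | cs.length v ≤ N} := by
    rintro t ⟨v, hv, h⟩
    exact ⟨v, hv, v * t, (lt_of_nn cs h).le.trans hv, by simp⟩
  exact ((ball_finite cs N).image2 _ (ball_finite cs N)).subset this

lemma stepOK_of (N : ℕ) (w : W) (i : B) (h : w⁻¹ * cs.simple i * w ∉ HH cs N) :
    StepOK cs N w i := by
  intro v hv
  rw [nn_iff_left, nn_iff_left, nn_mul]
  have e1 : v * ((w * v)⁻¹ * cs.simple i * (w * v)) * v⁻¹ = w⁻¹ * cs.simple i * w := by group
  have e2 : (w * v)⁻¹ * cs.simple i * (w * v) = v⁻¹ * (w⁻¹ * cs.simple i * w) * v := by group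
  rw [e1, e2, ← nn_inv]
  rcases zmod2 (nn cs v⁻¹ (w⁻¹ * cs.simple i * w)) with h0 | h1
  · rw [h0, zero_add]
  · exact absurd ⟨v⁻¹, by rwa [length_inv], h1⟩ h

lemma path_aux (N : ℕ) (w' : W) : ∀ (k : ℕ) (w : W), cs.length (w' * w⁻¹) = k →
    (∀ t ∈ HH cs N, nn cs w t = nn cs w' t) → Relation.ReflTransGen (Step cs N) w w' := by
  intro k
  induction k with
  | zero =>
    intro w h _
    rw [length_eq_zero_iff, mul_inv_eq_one] at h
    rw [h]
  | succ k ih =>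
    intro w h hp
    have hne : w' * w⁻¹ ≠ 1 := by
      intro h1; rw [h1, length_one] at h; omega
    obtain ⟨i, hi⟩ := cs.exists_rightDescent_of_ne_one hne
    have hi' := cs.isRightDescent_iff.1 hi
    have hn : nn cs (w' * w⁻¹) (cs.simple i) = 1 :=
      (nn_iff cs (cs.isReflection_simple i)).1 hi
    set t := w⁻¹ * cs.simple i * w with ht
    have e : w * t * w⁻¹ = cs.simple i := by rw [ht]; group
    have hw' : nn cs w' t = nn cs w t + 1 := by
      conv_lhs => rw [show w' = (w' * w⁻¹) * w by group]
      rw [nn_mul, e, hn]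
    have htH : t ∉ HH cs N := by
      intro hm
      have := hp t hm
      rw [this] at hw'
      have h01 : (1 : ZMod 2) = 0 := by
        have := hw'
        linear_combination -this
      exact absurd h01 (by decide)
    refine Relation.ReflTransGen.head ⟨i, stepOK_of cs N w i htH, rfl⟩ (ih _ ?_ ?_)
    · rw [mul_inv_rev, inv_simple, ← mul_assoc]; omega
    · intro r hr
      rw [nn_mul, ← hp r hr, nn_simple_ne, add_zero]
      intro h3
      apply htH
      have : t = r := by rw [ht, ← h3]; group
      rwa [this]

lemma exists_rep [Finite B] (N : ℕ) : ∃ D : ℕ, ∀ w : W, ∃ w', cs.length w' ≤ D ∧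
    Relation.ReflTransGen (Step cs N) w w' := by
  classical
  let P : W → Set W := fun w => {t ∈ HH cs N | nn cs w t = 1}
  have hfin : (Set.range P).Finite := by
    refine ((HH_finite cs N).powerset).subset ?_
    rintro _ ⟨w, rfl⟩
    exact fun t ht => ht.1
  have hch : ∀ p ∈ Set.range P, ∃ w, P w = p := fun p hp => hp
  choose! f hf using hch
  obtain ⟨D, hD⟩ := (hfin.image (fun p => cs.length (f p))).bddAbove
  refine ⟨D, fun w => ⟨f (P w), hD ⟨P w, ⟨w, rfl⟩, rfl⟩, path_aux cs N _ _ w rfl ?_⟩⟩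
  intro t ht
  have h := hf (P w) ⟨w, rfl⟩
  have h2 : t ∈ P (f (P w)) ↔ t ∈ P w := by rw [h]
  simp only [P, Set.mem_ofPred_eq, ht, true_and] at h2
  rcases zmod2 (nn cs w t) with a | a
  · rcases zmod2 (nn cs (f (P w)) t) with b | b
    · rw [a, b]
    · exact absurd (h2.1 b) (by rw [a]; decide)
  · rw [a]; exact (h2.2 a).symm

end Cox

section Bld

variable {B W C : Type*} [Group W] {M : CoxeterMatrix B} {cs : CoxeterSystem M W}
  {δ : C → C → W}

lemma dself (hb : IsBuilding cs δ) (c : C) : δ c c = 1 := (hb.eq_one_iff c c).2 rfl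

lemma adj_symm (hb : IsBuilding cs δ) {c d : C} {i : B} (h : δ c d = cs.simple i) :
    δ d c = cs.simple i := by
  obtain ⟨d', h1, h2⟩ := hb.wd3 c d i
  rw [h, simple_mul_simple_self, hb.eq_one_iff] at h2
  rwa [← h2] at h1

/-- going back one step along a minimal gallery -/
lemma back (hb : IsBuilding cs δ) {c d : C} {n : ℕ} (h : cs.length (δ c d) = n + 1) :
    ∃ (d' : C) (i : B), δ d d' = cs.simple i ∧ δ d' d = cs.simple i ∧
      δ c d' = δ c d * cs.simple i ∧ cs.length (δ c d') = n := by
  have hne : δ c d ≠ 1 := by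
    intro h1; rw [h1, length_one] at h; omega
  obtain ⟨i, hi⟩ := cs.exists_rightDescent_of_ne_one hne
  have hi' := cs.isRightDescent_iff.1 hi
  obtain ⟨d', h1, h2⟩ := hb.wd3 c d i
  exact ⟨d', i, h1, adj_symm hb h1, h2, by rw [h2]; omega⟩

lemma lwd2' (hb : IsBuilding cs δ) {x y : C} {i : B} (hxy : δ x y = cs.simple i) :
    ∀ (n : ℕ) (z : C), cs.length (δ y z) = n → cs.length (cs.simple i * δ y z) = n + 1 →
      δ x z = cs.simple i * δ y z := by
  intro n
  induction n with
  | zero =>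
    intro z h _
    rw [length_eq_zero_iff] at h
    rw [h, mul_one]
    rw [hb.eq_one_iff] at h
    rw [← h, hxy]
  | succ n ih =>
    intro z h h2
    obtain ⟨z', t, h3, h4, h5, h6⟩ := back hb h
    have e1 : cs.length (cs.simple i * δ y z') ≤ n + 1 := by
      have := cs.length_mul_le (cs.simple i) (δ y z')
      rw [length_simple] at this; omega
    have e3 : cs.simple i * δ y z' * cs.simple t = cs.simple i * δ y z := by
      rw [h5]; simp [mul_assoc]
    have e2 : n + 1 ≤ cs.length (cs.simple i * δ y z') := by
      have := cs.length_mul_le (cs.simple i * δ y z') (cs.simple t)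
      rw [length_simple, e3] at this; omega
    have e4 := ih z' h6 (by omega)
    have := hb.wd2' x z' z t h4 (by rw [e4, e3]; omega)
    rw [this, e4, e3]

lemma dinv_aux (hb : IsBuilding cs δ) : ∀ (n : ℕ) (c d : C), cs.length (δ c d) = n →
    δ d c = (δ c d)⁻¹ := by
  intro n
  induction n with
  | zero =>
    intro c d h
    rw [length_eq_zero_iff] at h
    rw [h, inv_one, hb.eq_one_iff]
    exact ((hb.eq_one_iff c d).1 h).symm
  | succ n ih =>
    intro c d h
    obtain ⟨d', t, h3, h4, h5, h6⟩ := back hb h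
    have e := ih c d' h6
    have e2 : cs.simple t * δ d' c = (δ c d)⁻¹ := by rw [e, h5]; simp
    rw [lwd2' hb h3 n c (by rw [e, length_inv, h6]) (by rw [e2, length_inv, h]), e2]

lemma dinv (hb : IsBuilding cs δ) (c d : C) : δ d c = (δ c d)⁻¹ := dinv_aux hb _ c d rfl

lemma lwd2 (hb : IsBuilding cs δ) {x y : C} {i : B} (hxy : δ x y = cs.simple i) (z : C) :
    δ x z = cs.simple i * δ y z ∨ δ x z = δ y z := by
  rcases hb.wd2 z y x i (adj_symm hb hxy) with h | h
  · left; rw [dinv hb z x, h, dinv hb z y]; simp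
  · right; rw [dinv hb z x, h, dinv hb z y]

lemma lwd3 (hb : IsBuilding cs δ) (y z : C) (i : B) : ∃ x, δ x y = cs.simple i ∧
    δ x z = cs.simple i * δ y z := by
  obtain ⟨x, h1, h2⟩ := hb.wd3 z y i
  refine ⟨x, adj_symm hb h1, ?_⟩
  rw [dinv hb z x, h2, dinv hb z y]; simp

lemma lip (hb : IsBuilding cs δ) (x y : C) : ∀ (n : ℕ) (z : C), cs.length (δ y z) = n →
    cs.length ((δ x y)⁻¹ * δ x z) ≤ n := by
  intro n
  induction n with
  | zero =>
    intro z h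
    rw [length_eq_zero_iff, hb.eq_one_iff] at h
    subst h
    simp
  | succ n ih =>
    intro z h
    obtain ⟨z', t, h3, h4, h5, h6⟩ := back hb h
    have e := ih z' h6
    rcases hb.wd2 x z' z t h4 with h | h
    · rw [h, ← mul_assoc]
      have := cs.length_mul_le ((δ x y)⁻¹ * δ x z') (cs.simple t)
      rw [length_simple] at this; omega
    · rw [h]; omega

lemma tri (hb : IsBuilding cs δ) (x y z : C) :
    cs.length (δ x z) ≤ cs.length (δ x y) + cs.length (δ y z) := by
  have h := lip hb x y _ z rfl
  have := cs.length_mul_le (δ x y) ((δ x y)⁻¹ * δ x z)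
  rw [mul_inv_cancel_left] at this; omega

/-- adjacency inside a set of chambers -/
def AdjIn (cs : CoxeterSystem M W) (δ : C → C → W) (Y : Set C) (x y : C) : Prop :=
  x ∈ Y ∧ y ∈ Y ∧ ∃ i : B, δ x y = cs.simple i

lemma gallery_in (hb : IsBuilding cs δ) (Y : Set C) (x : C) : ∀ (n : ℕ) (y : C),
    cs.length (δ x y) = n → (∀ z, cs.length (δ x z) ≤ n → z ∈ Y) →
    Relation.ReflTransGen (AdjIn cs δ Y) x y := by
  intro n
  induction n with
  | zero =>
    intro y h _
    rw [length_eq_zero_iff, hb.eq_one_iff] at h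
    rw [h]
  | succ n ih =>
    intro y h hY
    obtain ⟨y', t, h3, h4, h5, h6⟩ := back hb h
    refine (ih y' h6 fun z hz => hY z (by omega)).tail ⟨hY _ (by omega), hY _ (by omega), t, h4⟩

lemma len_left_cases (cs : CoxeterSystem M W) (i : B) (g : W)
    (h : ¬ cs.length (cs.simple i * g) < cs.length g) :
    cs.length (cs.simple i * g) = cs.length g + 1 := by
  rcases cs.length_simple_mul g i with h1 | h1 <;> omega

lemma transfer (hb : IsBuilding cs δ) (Y : Set C) (x0 : C) (hx0 : x0 ∈ Y)
    (hcon : ∀ x ∈ Y, Relation.ReflTransGen (AdjIn cs δ Y) x0 x) (N : ℕ) (c0 : C) (w : W)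
    (i : B) (hN : ∀ x ∈ Y, cs.length (w⁻¹ * δ c0 x) ≤ N) (hok : StepOK cs (N + 1) w i) :
    ∃ c1, ∀ x ∈ Y, δ c1 x = cs.simple i * δ c0 x := by
  obtain ⟨c1, hc, hc0⟩ := lwd3 hb c0 x0 i
  refine ⟨c1, ?_⟩
  by_cases hw : cs.length (cs.simple i * w) < cs.length w
  · intro x hx
    have hx' := hcon x hx
    clear hx
    induction hx' with
    | refl => exact hc0
    | @tail x x' _ hs ih =>
      obtain ⟨hx, hx', t, ht⟩ := hs
      by_contra hbad
      have h1 : δ c1 x' = δ c0 x' := (lwd2 hb hc x').resolve_left hbad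
      have key : cs.simple i * δ c0 x = δ c0 x * cs.simple t := by
        rcases hb.wd2 c1 x x' t ht with h2 | h2 <;> rcases hb.wd2 c0 x x' t ht with h3 | h3
        · exfalso; apply hbad; rw [h2, h3, ih, mul_assoc]
        · have h4 : cs.simple i * δ c0 x * cs.simple t = δ c0 x := by rw [← ih, ← h2, h1, h3]
          have h5 := congrArg (fun u => u * cs.simple t) h4
          simpa using h5
        · rw [← ih, ← h2, h1, h3]
        · exfalso; apply hbad; rw [h2, h3, ih]
      have a1 := hok (w⁻¹ * δ c0 x) ((hN x hx).trans (by omega))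
      have a2 := hok (w⁻¹ * δ c0 x * cs.simple t) (by
        have := cs.length_mul_le (w⁻¹ * δ c0 x) (cs.simple t)
        rw [length_simple] at this
        have := hN x hx
        omega)
      rw [← mul_assoc w, mul_inv_cancel_left] at a2
      rw [mul_inv_cancel_left] at a1
      have b1 := a1.2 hw
      have b2 := a2.2 hw
      rw [← key, simple_mul_simple_cancel_left] at b2
      omega
  · intro x hx
    have a1 := hok (w⁻¹ * δ c0 x) ((hN x hx).trans (by omega))
    rw [mul_inv_cancel_left] at a1
    have a2 : ¬ cs.length (cs.simple i * δ c0 x) < cs.length (δ c0 x) := fun h => hw (a1.1 h)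
    exact lwd2' hb hc _ x rfl (len_left_cases cs i _ a2)

lemma transfer_star (hb : IsBuilding cs δ) (Y : Set C) (x0 : C) (hx0 : x0 ∈ Y)
    (hcon : ∀ x ∈ Y, Relation.ReflTransGen (AdjIn cs δ Y) x0 x) (N : ℕ) (c0 : C) (w w' : W)
    (hN : ∀ x ∈ Y, cs.length (w⁻¹ * δ c0 x) ≤ N)
    (hst : Relation.ReflTransGen (Step cs (N + 1)) w w') :
    ∃ c1, ∀ x ∈ Y, δ c1 x = w' * (w⁻¹ * δ c0 x) := by
  induction hst with
  | refl => exact ⟨c0, fun x _ => by simp⟩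
  | @tail a b _ hs ih =>
    obtain ⟨c1, h1⟩ := ih
    obtain ⟨i, hok, rfl⟩ := hs
    have e : ∀ x ∈ Y, a⁻¹ * δ c1 x = w⁻¹ * δ c0 x := fun x hx => by
      rw [h1 x hx, inv_mul_cancel_left]
    obtain ⟨c2, h2⟩ := transfer hb Y x0 hx0 hcon N c1 a i
      (fun x hx => by rw [e x hx]; exact hN x hx) hok
    exact ⟨c2, fun x hx => by rw [h2 x hx, h1 x hx, mul_assoc]⟩

end Bld

section Main

variable {B W C : Type*} [Group W] {M : CoxeterMatrix B} {cs : CoxeterSystem M W}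
  {δ : C → C → W}

lemma comp_bound (hb : IsBuilding cs δ) (c0 x0 : C) (N D : ℕ) (w' : W)
    (hD : cs.length w' ≤ D)
    (hst : Relation.ReflTransGen (Step cs (N + 1)) (δ c0 x0) w') :
    ∀ x y, Relation.ReflTransGen
        (AdjIn cs δ {z | cs.length ((δ c0 x0)⁻¹ * δ c0 z) ≤ N}) x0 x →
      Relation.ReflTransGen
        (AdjIn cs δ {z | cs.length ((δ c0 x0)⁻¹ * δ c0 z) ≤ N}) x0 y →
      cs.length (δ x y) ≤ 2 * (D + N) := by
  set B0 : Set C := {z | cs.length ((δ c0 x0)⁻¹ * δ c0 z) ≤ N} with hB0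
  intro x y hx hy
  have hx0 : x0 ∈ B0 := by simp [hB0]
  obtain ⟨c1, h1⟩ := transfer_star hb {z | Relation.ReflTransGen (AdjIn cs δ B0) x0 z} x0
    Relation.ReflTransGen.refl (by
      intro z hz
      induction (show Relation.ReflTransGen (AdjIn cs δ B0) x0 z from hz) with
      | refl => exact Relation.ReflTransGen.refl
      | @tail a b ha hab ih =>
        exact (ih ha).tail ⟨ha, Relation.ReflTransGen.tail ha hab, hab.2.2⟩)
    N c0 (δ c0 x0) w' (by
      intro z hz
      rcases Relation.ReflTransGen.cases_tail hz with h | ⟨b, _, hb⟩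
      · rw [← h] at hx0; exact hx0
      · exact hb.2.1) hst
  have hlen : ∀ z, Relation.ReflTransGen (AdjIn cs δ B0) x0 z →
      cs.length (δ c1 z) ≤ D + N := by
    intro z hz
    rw [h1 z hz]
    have := cs.length_mul_le w' ((δ c0 x0)⁻¹ * δ c0 z)
    have h2 : z ∈ B0 := by
      rcases Relation.ReflTransGen.cases_tail hz with h | ⟨b, _, hb⟩
      · rw [← h] at hx0; exact hx0
      · exact hb.2.1
    have h3 : cs.length ((δ c0 x0)⁻¹ * δ c0 z) ≤ N := h2
    omega
  have t := tri hb x c1 y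
  rw [dinv hb c1 x, length_inv] at t
  have := hlen x hx
  have := hlen y hy
  omega

lemma upper [Finite B] [Nonempty C] (hb : IsBuilding cs δ) (n : ℕ)
    (h : AsdimLE (fun u v : W => (cs.length (u⁻¹ * v) : ℝ)) n) :
    AsdimLE (fun c c' : C => (cs.length (δ c c') : ℝ)) n := by
  obtain ⟨c0⟩ := ‹Nonempty C›
  intro d hd
  obtain ⟨𝒰, ⟨R, hR⟩, hcov, hdis⟩ := h d hd
  obtain ⟨K1, hK1⟩ := exists_nat_ge R
  obtain ⟨K2, hK2⟩ := exists_nat_ge d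
  obtain ⟨D, hD⟩ := exists_rep cs (K1 + K2 + 1)
  let st : Set W → C → C → Prop := fun U x y =>
    δ c0 x ∈ U ∧ δ c0 y ∈ U ∧ (cs.length (δ x y) : ℝ) < d
  have hmem : ∀ U x0 y, δ c0 x0 ∈ U → Relation.ReflTransGen (st U) x0 y → δ c0 y ∈ U := by
    intro U x0 y h0 hy
    rcases Relation.ReflTransGen.cases_tail hy with h | ⟨b, _, hb⟩
    · rw [h]; exact h0
    · exact hb.2.1
  refine ⟨fun i => {V | ∃ U ∈ 𝒰 i, ∃ x0, δ c0 x0 ∈ U ∧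
    V = {y | Relation.ReflTransGen (st U) x0 y}}, ⟨((2 * (D + (K1 + K2)) : ℕ) : ℝ), ?_⟩, ?_, ?_⟩
  · rintro i V ⟨U, hU, x0, h0, rfl⟩ x hx y hy
    obtain ⟨w', hw', hst⟩ := hD (δ c0 x0)
    have hin : ∀ z, Relation.ReflTransGen (st U) x0 z → Relation.ReflTransGen
        (AdjIn cs δ {z | cs.length ((δ c0 x0)⁻¹ * δ c0 z) ≤ K1 + K2}) x0 z := by
      intro z hz
      induction hz with
      | refl => exact Relation.ReflTransGen.refl
      | @tail a b _ hab ih =>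
        refine ih.trans (gallery_in hb _ a _ b rfl ?_)
        intro z hz
        have e1 := hR i U hU _ h0 _ hab.1
        beta_reduce at e1
        have e2 : cs.length ((δ c0 x0)⁻¹ * δ c0 a) ≤ K1 := by exact_mod_cast e1.trans hK1
        have e3 : cs.length (δ a b) ≤ K2 := by exact_mod_cast hab.2.2.le.trans hK2
        have e4 := lip hb c0 a _ z rfl
        have e5 := cs.length_mul_le ((δ c0 x0)⁻¹ * δ c0 a) ((δ c0 a)⁻¹ * δ c0 z)
        rw [mul_assoc, mul_inv_cancel_left] at e5
        change cs.length ((δ c0 x0)⁻¹ * δ c0 z) ≤ K1 + K2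
        omega
    beta_reduce
    exact_mod_cast comp_bound hb c0 x0 (K1 + K2) D w' hw' hst x y (hin x hx) (hin y hy)
  · intro x
    obtain ⟨i, U, hU, hx⟩ := hcov (δ c0 x)
    exact ⟨i, _, ⟨U, hU, x, hx, rfl⟩, Relation.ReflTransGen.refl⟩
  · rintro i V ⟨U, hU, x0, h0, rfl⟩ V' ⟨U', hU', x0', h0', rfl⟩ hne x hx y hy
    by_contra hlt
    rw [not_le] at hlt
    have hxU := hmem U x0 x h0 hx
    have hyU := hmem U' x0' y h0' hy
    by_cases hUU : U = U'
    · subst hUU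
      apply hne
      have hsym : ∀ a b, st U a b → st U b a := by
        intro a b hab
        refine ⟨hab.2.1, hab.1, ?_⟩
        rw [dinv hb a b, length_inv]; exact hab.2.2
      have hsym' : ∀ {a b}, Relation.ReflTransGen (st U) a b →
          Relation.ReflTransGen (st U) b a := by
        intro a b hab
        induction hab with
        | refl => exact Relation.ReflTransGen.refl
        | tail _ h ih => exact Relation.ReflTransGen.head (hsym _ _ h) ih
      have h1 : Relation.ReflTransGen (st U) x0 x0' :=
        (Relation.ReflTransGen.tail hx ⟨hxU, hyU, hlt⟩).trans (hsym' hy)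
      ext z
      exact ⟨fun hz => (hsym' h1).trans hz, fun hz => h1.trans hz⟩
    · have h1 := hdis i U hU U' hU' hUU _ hxU _ hyU
      have h2 : (cs.length ((δ c0 x)⁻¹ * δ c0 y) : ℝ) ≤ cs.length (δ x y) := by
        exact_mod_cast lip hb c0 x _ y rfl
      exact absurd (h1.trans h2) (not_le.2 hlt)

/-- graphs of partial isometries from `W` to the building -/
def IsoG (δ : C → C → W) (G : Set (W × C)) : Prop :=
  ∀ p ∈ G, ∀ q ∈ G, δ p.2 q.2 = p.1⁻¹ * q.1

lemma iso_ext (hb : IsBuilding cs δ) (G : Set (W × C)) (hG : IsoG δ G) (w : W) (c : C)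
    (hw : (w, c) ∈ G) (i : B) : ∃ x, ∀ p ∈ G, δ x p.2 = cs.simple i * (w⁻¹ * p.1) := by
  have hc : ∀ p ∈ G, δ c p.2 = w⁻¹ * p.1 := fun p hp => hG _ hw p hp
  by_cases hex : ∃ p0 ∈ G, cs.length (cs.simple i * δ c p0.2) < cs.length (δ c p0.2)
  · obtain ⟨p0, hp0, hlt⟩ := hex
    obtain ⟨x, hx, hx0⟩ := lwd3 hb c p0.2 i
    refine ⟨x, fun p hp => ?_⟩
    rw [← hc p hp]
    rcases lwd2 hb hx p.2 with h | h
    · exact h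
    · exfalso
      have hl := lip hb p.2 p0.2 _ x rfl
      rw [dinv hb x p.2, h, dinv hb x p0.2, hx0, length_inv, hG p hp p0 hp0, hc p hp] at hl
      have e : (p.1⁻¹ * p0.1)⁻¹ * (w⁻¹ * p.1)⁻¹ = (δ c p0.2)⁻¹ := by
        rw [hc p0 hp0]; group
      rw [e, length_inv] at hl
      omega
  · push Not at hex
    obtain ⟨x, hx, -⟩ := lwd3 hb c c i
    refine ⟨x, fun p hp => ?_⟩
    rw [← hc p hp]
    exact lwd2' hb hx _ p.2 rfl (len_left_cases cs i _ (not_lt.2 (hex p hp)))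

lemma exists_apartment [Nonempty C] (hb : IsBuilding cs δ) :
    ∃ f : W → C, ∀ u v, δ (f u) (f v) = u⁻¹ * v := by
  obtain ⟨c0⟩ := ‹Nonempty C›
  obtain ⟨G, h0, hmax⟩ := zorn_subset_nonempty {G : Set (W × C) | IsoG δ G} (by
    intro c hc hch hne
    refine ⟨⋃₀ c, ?_, fun s hs => Set.subset_sUnion_of_mem hs⟩
    rintro p ⟨s, hs, hp⟩ q ⟨t, ht, hq⟩
    rcases hch.total hs ht with h | h
    · exact hc ht p (h hp) q hq
    · exact hc hs p hp q (h hq)) {((1 : W), c0)} (by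
    rintro p rfl q rfl
    simp [dself hb])
  have hG : IsoG δ G := hmax.prop
  have hdom : ∀ w : W, ∃ c, (w, c) ∈ G := by
    intro w
    induction w using cs.simple_induction_right with
    | one => exact ⟨c0, h0 rfl⟩
    | mul_simple_right w i ih =>
      obtain ⟨c, hc⟩ := ih
      obtain ⟨x, hx⟩ := iso_ext hb G hG w c hc i
      refine ⟨x, ?_⟩
      have hins : IsoG δ (insert (w * cs.simple i, x) G) := by
        rintro p (rfl | hp) q (rfl | hq)
        · simp [dself hb]
        · rw [hx q hq]; simp [mul_assoc]
        · rw [dinv hb x p.2, hx p hp]; simp [mul_assoc]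
        · exact hG p hp q hq
      exact hmax.le_of_ge hins (Set.subset_insert _ _) (Set.mem_insert _ _)
  choose f hf using hdom
  exact ⟨f, fun u v => hG _ (hf u) _ (hf v)⟩

lemma lower [Nonempty C] (hb : IsBuilding cs δ) (n : ℕ)
    (h : AsdimLE (fun c c' : C => (cs.length (δ c c') : ℝ)) n) :
    AsdimLE (fun u v : W => (cs.length (u⁻¹ * v) : ℝ)) n := by
  obtain ⟨f, hf⟩ := exists_apartment hb
  intro d hd
  obtain ⟨𝒰, ⟨R, hR⟩, hcov, hdis⟩ := h d hd
  refine ⟨fun i => {V | ∃ U ∈ 𝒰 i, V = f ⁻¹' U}, ⟨R, ?_⟩, ?_, ?_⟩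
  · rintro i V ⟨U, hU, rfl⟩ x hx y hy
    have := hR i U hU _ hx _ hy
    beta_reduce at this ⊢
    rwa [hf] at this
  · intro x
    obtain ⟨i, U, hU, hx⟩ := hcov (f x)
    exact ⟨i, _, ⟨U, hU, rfl⟩, hx⟩
  · rintro i V ⟨U, hU, rfl⟩ V' ⟨U', hU', rfl⟩ hne x hx y hy
    have hUU : U ≠ U' := fun h => hne (by rw [h])
    have := hdis i U hU U' hU' hUU _ hx _ hy
    beta_reduce at this ⊢
    rwa [hf] at this

end Main

end DS

/-- The asymptotic dimension of any building (with the gallery metric) equals the asymptotic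
dimension of its apartment `W` (with the word metric). -/
theorem asdim_building_eq_asdim_coxeter {B W C : Type*} [Finite B] [Group W]
    {M : CoxeterMatrix B} (cs : CoxeterSystem M W) (δC : C → C → W)
    (hb : IsBuilding cs δC) [Nonempty C] :
    asdim (fun c c' : C => (cs.length (δC c c') : ℝ)) =
      asdim (fun u v : W => (cs.length (u⁻¹ * v) : ℝ)) := by
  unfold asdim
  congr 1
  ext m
  constructor
  · rintro ⟨n, hn, h⟩
    exact ⟨n, hn, DS.lower hb n h⟩
  · rintro ⟨n, hn, h⟩
    exact ⟨n, hn, DS.upper hb n h⟩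
end
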